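/- arXiv:2012.03384 — 3 statements merged into one kernel-verified Lean document; each statement's English description precedes it below -/
import Mathlib

section
/- Let $A \in \mathbb{R}^{n \times n}$, $B \in \mathbb{R}^{n \times m}$, $H \in \mathbb{R}^{o \times n}$, and suppose the observability matrix $\mathcal{O} = [H^T, (HA)^T, \dots, (HA^{n-1})^T]^T$ has full column rank. Let $\mathcal{Z} \subset \mathbb{R}^o$ and $\mathcal{U} \subset \mathbb{R}^m$ be compact sets, and fix an integer $\bar i \geq n-1$. Then: (i) the set $S = \{\bar x_0 \in \mathbb{R}^n \mid \exists\, \bar u_0,\dots,\bar u_{\bar i - 1} \in \mathcal{U} \text{ such that the trajectory } \bar x_{i+1} = A\bar x_i + B\bar u_i \text{ satisfies } H\bar x_i \in \mathcal{Z} \text{ for } i = 0,\dots,\bar i\}$ is bounded; consequently each coordinate supremum $b_{\bar x, l} = \sup_{x \in S} h_{\bar x, l}^T x$ over the rows $h_{\bar x, l}^T$ of $H_{\bar x} = [I, -I]^T$ is finite and the hyper-rectangle $\bar{\mathcal{X}} = \{\bar x \mid H_{\bar x} \bar x \leq b_{\bar x}\}$ is compact; and (ii) any sequence $(\bar x_k,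 \bar u_k)_{k \geq \underline{k}}$ satisfying $\bar x_{k+1} = A \bar x_k + B \bar u_k$, $\bar u_k \in \mathcal{U}$, and $H \bar x_k \in \mathcal{Z}$ for all $k \geq \underline{k}$ satisfies $\bar x_k \in \bar{\mathcal{X}}$ for all $k \geq \underline{k}$. -/
open Matrix

/-- The rows of `H_x̄ = [I, -I]ᵀ`: the standard basis vectors and their negatives. -/
noncomputable def Hrow (n : ℕ) : (Fin n ⊕ Fin n) → (Fin n → ℝ) :=
  Sum.elim (fun j => Pi.single j 1) (fun j => -Pi.single j 1)

/-- The set `S` of initial ROM states `x̄₀` from which there exists an admissible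
control sequence (in `U`) of length `ī` keeping the performance outputs in `Z`
for `i = 0, …, ī`. -/
def reachSet {n m o : ℕ} (A : Matrix (Fin n) (Fin n) ℝ) (B : Matrix (Fin n) (Fin m) ℝ)
    (H : Matrix (Fin o) (Fin n) ℝ) (Z : Set (Fin o → ℝ)) (U : Set (Fin m → ℝ))
    (ibar : ℕ) : Set (Fin n → ℝ) :=
  {x0 | ∃ x : ℕ → Fin n → ℝ, ∃ u : ℕ → Fin m → ℝ,
    x 0 = x0 ∧ (∀ i < ibar, u i ∈ U) ∧
    (∀ i < ibar, x (i + 1) = A.mulVec (x i) + B.mulVec (u i)) ∧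
    (∀ i ≤ ibar, H.mulVec (x i) ∈ Z)}

/-- The coordinate suprema `b_{x̄,l} = sup_{x ∈ S} h_{x̄,l}ᵀ x` over the rows of `H_x̄`. -/
noncomputable def bbar {n m o : ℕ} (A : Matrix (Fin n) (Fin n) ℝ) (B : Matrix (Fin n) (Fin m) ℝ)
    (H : Matrix (Fin o) (Fin n) ℝ) (Z : Set (Fin o → ℝ)) (U : Set (Fin m → ℝ))
    (ibar : ℕ) : (Fin n ⊕ Fin n) → ℝ :=
  fun l => sSup ((fun x => Hrow n l ⬝ᵥ x) '' reachSet A B H Z U ibar)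

/-- The hyper-rectangle `X̄ = {x̄ : H_x̄ x̄ ≤ b_x̄}`. -/
def Xbar {n m o : ℕ} (A : Matrix (Fin n) (Fin n) ℝ) (B : Matrix (Fin n) (Fin m) ℝ)
    (H : Matrix (Fin o) (Fin n) ℝ) (Z : Set (Fin o → ℝ)) (U : Set (Fin m → ℝ))
    (ibar : ℕ) : Set (Fin n → ℝ) :=
  {x | ∀ l : Fin n ⊕ Fin n, Hrow n l ⬝ᵥ x ≤ bbar A B H Z U ibar l}

theorem aux_drift {n m : ℕ} (A : Matrix (Fin n) (Fin n) ℝ) (B : Matrix (Fin n) (Fin m) ℝ)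
    (U : Set (Fin m → ℝ)) (hU : IsCompact U) (i : ℕ) :
    ∃ D : Set (Fin n → ℝ), IsCompact D ∧ ∀ (x : ℕ → Fin n → ℝ) (u : ℕ → Fin m → ℝ),
      (∀ k < i, u k ∈ U) → (∀ k < i, x (k + 1) = A.mulVec (x k) + B.mulVec (u k)) →
      x i - (A ^ i).mulVec (x 0) ∈ D := by
  induction i with
  | zero => exact ⟨{0}, isCompact_singleton, fun x u _ _ => by simp⟩
  | succ i ih =>
    obtain ⟨D, hD, h⟩ := ih
    refine ⟨(fun p : (Fin n → ℝ) × (Fin m → ℝ) => A.mulVec p.1 + B.mulVec p.2) '' (D ×ˢ U),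
      (hD.prod hU).image (by fun_prop), fun x u hu hx => ?_⟩
    refine ⟨(x i - (A ^ i).mulVec (x 0), u i),
      ⟨h x u (fun k hk => hu k (by omega)) (fun k hk => hx k (by omega)), hu i (by omega)⟩, ?_⟩
    simp only
    rw [hx i (by omega), Matrix.mulVec_sub, Matrix.mulVec_mulVec, ← pow_succ']
    abel

theorem aux_out {n m o : ℕ} (A : Matrix (Fin n) (Fin n) ℝ) (B : Matrix (Fin n) (Fin m) ℝ)
    (H : Matrix (Fin o) (Fin n) ℝ) (Z : Set (Fin o → ℝ)) (U : Set (Fin m → ℝ))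
    (hZ : IsCompact Z) (hU : IsCompact U) (ibar i : ℕ) (hi : i ≤ ibar) :
    ∃ R : ℝ, ∀ x0 ∈ reachSet A B H Z U ibar, ‖(H * A ^ i).mulVec x0‖ ≤ R := by
  obtain ⟨D, hD, h⟩ := aux_drift A B U hU i
  have hK : IsCompact ((fun p : (Fin o → ℝ) × (Fin n → ℝ) => p.1 - H.mulVec p.2) '' (Z ×ˢ D)) :=
    (hZ.prod hD).image (by fun_prop)
  obtain ⟨R, hR⟩ := hK.isBounded.exists_norm_le
  refine ⟨R, ?_⟩
  rintro x0 ⟨x, u, rfl, hu, hx, hz⟩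
  apply hR
  refine ⟨(H.mulVec (x i), x i - (A ^ i).mulVec (x 0)), ⟨hz i hi,
    h x u (fun k hk => hu k (by omega)) (fun k hk => hx k (by omega))⟩, ?_⟩
  simp only
  rw [Matrix.mulVec_sub, Matrix.mulVec_mulVec]
  abel

theorem aux_inj {ι : Type*} [Fintype ι] {n : ℕ} (M : Matrix ι (Fin n) ℝ) (h : M.rank = n) :
    LinearMap.ker M.mulVecLin = ⊥ := by
  have h1 := LinearMap.finrank_range_add_finrank_ker M.mulVecLin
  rw [Matrix.rank] at h
  rw [h] at h1
  simp only [Module.finrank_fintype_fun_eq_card, Fintype.card_fin] at h1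
  exact Submodule.finrank_eq_zero.mp (by omega)

/-- **Proposition 1.** If the observability matrix
`𝒪 = [Hᵀ, (HA)ᵀ, …, (HA^{n-1})ᵀ]ᵀ` has full column rank, `Z` and `U` are compact
and `ī ≥ n - 1`, then (i) the set `S` of admissible initial states is bounded,
each coordinate supremum is finite (the image sets are bounded above), and the
hyper-rectangle `X̄` is compact; and (ii) every trajectory
`x̄_{k+1} = A x̄_k + B ū_k` with `ū_k ∈ U` and `H x̄_k ∈ Z` for all `k ≥ k̲`
satisfies `x̄_k ∈ X̄` for all `k ≥ k̲`. -/
theorem prop_Xbar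
    (n m o : ℕ)
    (A : Matrix (Fin n) (Fin n) ℝ) (B : Matrix (Fin n) (Fin m) ℝ)
    (H : Matrix (Fin o) (Fin n) ℝ)
    (hobs : (Matrix.of fun (p : Fin n × Fin o) (j : Fin n) =>
      (H * A ^ (p.1 : ℕ)) p.2 j).rank = n)
    (Z : Set (Fin o → ℝ)) (U : Set (Fin m → ℝ))
    (hZ : IsCompact Z) (hU : IsCompact U)
    (ibar : ℕ) (hibar : n - 1 ≤ ibar) :
    Bornology.IsBounded (reachSet A B H Z U ibar) ∧
    (∀ l : Fin n ⊕ Fin n,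
      BddAbove ((fun x => Hrow n l ⬝ᵥ x) '' reachSet A B H Z U ibar)) ∧
    IsCompact (Xbar A B H Z U ibar) ∧
    (∀ (kund : ℕ) (xb : ℕ → Fin n → ℝ) (ub : ℕ → Fin m → ℝ),
      (∀ k ≥ kund, xb (k + 1) = A.mulVec (xb k) + B.mulVec (ub k)) →
      (∀ k ≥ kund, ub k ∈ U) →
      (∀ k ≥ kund, H.mulVec (xb k) ∈ Z) →
      ∀ k ≥ kund, xb k ∈ Xbar A B H Z U ibar) := by
  have hbdd : Bornology.IsBounded (reachSet A B H Z U ibar) := by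
    obtain ⟨g, hg⟩ := LinearMap.exists_leftInverse_of_injective _ (aux_inj _ hobs)
    have hR : ∀ i : Fin n, ∃ R : ℝ, ∀ x0 ∈ reachSet A B H Z U ibar,
        ‖(H * A ^ (i : ℕ)).mulVec x0‖ ≤ R := fun i =>
      aux_out A B H Z U hZ hU ibar i (by have := i.2; omega)
    choose R hR using hR
    have hc : IsCompact (Set.pi Set.univ
        (fun p : Fin n × Fin o => Set.Icc (-R p.1) (R p.1))) :=
      isCompact_univ_pi fun p => isCompact_Icc
    refine (hc.image g.continuous_of_finiteDimensional).isBounded.subset ?_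
    intro x0 hx0
    refine ⟨_, ?_, LinearMap.congr_fun hg x0⟩
    intro p _
    exact abs_le.mp ((norm_le_pi_norm ((H * A ^ (p.1 : ℕ)).mulVec x0) p.2).trans (hR p.1 x0 hx0))
  have habove : ∀ l : Fin n ⊕ Fin n,
      BddAbove ((fun x => Hrow n l ⬝ᵥ x) '' reachSet A B H Z U ibar) := by
    intro l
    have hc := hbdd.isCompact_closure.image
      (show Continuous (fun x : Fin n → ℝ => Hrow n l ⬝ᵥ x) by fun_prop)
    exact hc.bddAbove.mono (Set.image_mono subset_closure)
  refine ⟨hbdd, habove, ?_, ?_⟩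
  · have hcl : IsClosed (Xbar A B H Z U ibar) := by
      simp only [Xbar, Set.setOf_forall]
      exact isClosed_iInter fun l => isClosed_le (by fun_prop) continuous_const
    refine IsCompact.of_isClosed_subset (isCompact_Icc
      (a := fun j => -bbar A B H Z U ibar (Sum.inr j))
      (b := fun j => bbar A B H Z U ibar (Sum.inl j))) hcl ?_
    intro x hx
    constructor
    · intro j
      have := hx (Sum.inr j)
      simp [Hrow] at this
      simp only
      linarith
    · intro j
      have := hx (Sum.inl j)
      simpa [Hrow] using this
  · intro kund xb ub hx hu hz k hk l
    refine le_csSup (habove l) ⟨xb k, ⟨fun i => xb (k + i), fun i => ub (k + i), rfl,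
      fun i _ => hu _ (by omega), fun i _ => hx (k + i) (by omega),
      fun i _ => hz _ (by omega)⟩, rfl⟩
end

section
/- Let $A_\epsilon \in \mathbb{R}^{N \times N}$, $B_\epsilon \in \mathbb{R}^{N \times q}$, $G_\epsilon \in \mathbb{R}^{N \times s}$, and let $\epsilon_k, r_k, \omega_k$ satisfy $\epsilon_{k+1} = A_\epsilon \epsilon_k + B_\epsilon r_k + G_\epsilon \omega_k$ for $k \geq \underline{k}$, where $\underline{k} = k_0 - 2\tau$ for an integer $\tau \geq 1$. Let $G$ be symmetric positive definite, and suppose: $\lVert A_\epsilon^i \rVert_G \leq M\gamma^i$ for all $i \geq 0$ with $M \geq 1$, $\gamma \in (0,1)$; $\lVert \epsilon_{\underline{k}} \rVert_G \leq \eta_{\underline{k}}$; $\lVert B_\epsilon r_j \rVert_G \leq C_r$ and $\lVert G_\epsilon \omega_j \rVert_G \leq C_\omega$ for all $j \geq \underline{k}$; and $r_j \in \mathcal{R}$, $\omega_j \in \Omega$ for all $j \geq \underline{k}$ for given sets $\mathcal{R}, \Omega$. For $\theta \in \mathbb{R}^N$, define $\Delta^{(1)}(\theta) = \lVert G^{-1/2}\theta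 \rVert_2 \left( M\gamma^{2\tau}\eta_{\underline{k}} + \frac{M\gamma^\tau (C_r + C_\omega)}{1-\gamma} \right)$ and $\Delta^{(2)}(\theta) = \sup \{ \theta^T \sum_{j=0}^{\tau-1} A_\epsilon^{\tau-1-j}(B_\epsilon \rho_j + G_\epsilon \sigma_j) \mid \rho_j \in \mathcal{R}, \sigma_j \in \Omega \}$. Then for every $\theta \in \mathbb{R}^N$ and every $k \geq k_0$: $\theta^T \epsilon_k \leq \Delta^{(1)}(\theta) + \Delta^{(2)}(\theta)$. -/
open Matrix

/-- Euclidean (ℓ²) norm of a vector in `ℝⁿ`. -/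
noncomputable def evNorm {n : ℕ} (x : Fin n → ℝ) : ℝ := Real.sqrt (∑ i, (x i) ^ 2)

/-- Weighted norm `‖x‖_G = √(xᵀ G x)` for a positive definite weighting matrix `G`. -/
noncomputable def normG {N : ℕ} (G : Matrix (Fin N) (Fin N) ℝ) (x : Fin N → ℝ) : ℝ :=
  Real.sqrt (x ⬝ᵥ G.mulVec x)

/-- Induced weighted matrix norm `‖A‖_G = sup_{x ≠ 0} ‖Ax‖_G / ‖x‖_G`. -/
noncomputable def matNormG {N : ℕ} (G A : Matrix (Fin N) (Fin N) ℝ) : ℝ :=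
  sSup {c | ∃ x : Fin N → ℝ, x ≠ 0 ∧ c = normG G (A.mulVec x) / normG G x}

theorem normG_eq_aux {N : ℕ} {G H : Matrix (Fin N) (Fin N) ℝ} (hH : H.PosDef) (hs : H * H = G)
    (x : Fin N → ℝ) : normG G x = ‖WithLp.toLp 2 (H *ᵥ x)‖ := by
  have ht : Hᵀ = H := by simpa using hH.isHermitian.eq
  rw [EuclideanSpace.norm_eq, normG, ← hs, ← Matrix.mulVec_mulVec, Matrix.dotProduct_mulVec,
    ← Matrix.mulVec_transpose, ht]
  congr 1
  simp [dotProduct, sq]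

theorem evNorm_eq_aux {N : ℕ} (x : Fin N → ℝ) : evNorm x = ‖WithLp.toLp 2 x‖ := by
  rw [EuclideanSpace.norm_eq, evNorm]
  simp

theorem normG_add_aux {N : ℕ} {G H : Matrix (Fin N) (Fin N) ℝ} (hH : H.PosDef) (hs : H * H = G)
    (x y : Fin N → ℝ) : normG G (x + y) ≤ normG G x + normG G y := by
  simp only [normG_eq_aux hH hs, Matrix.mulVec_add, WithLp.toLp_add]
  exact norm_add_le _ _

theorem inv_mulVec_aux {N : ℕ} {H : Matrix (Fin N) (Fin N) ℝ} (hH : H.PosDef)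
    (x : Fin N → ℝ) : H⁻¹ *ᵥ (H *ᵥ x) = x := by
  have hu : IsUnit H.det := (Matrix.isUnit_iff_isUnit_det _).1 hH.isUnit
  rw [Matrix.mulVec_mulVec, Matrix.nonsing_inv_mul _ hu, Matrix.one_mulVec]

theorem dot_le_aux {N : ℕ} {G H : Matrix (Fin N) (Fin N) ℝ} (hH : H.PosDef) (hs : H * H = G)
    (θ x : Fin N → ℝ) : θ ⬝ᵥ x ≤ evNorm (H⁻¹ *ᵥ θ) * normG G x := by
  have ht : Hᵀ = H := by simpa using hH.isHermitian.eq
  rw [evNorm_eq_aux, normG_eq_aux hH hs]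
  have h1 : θ ⬝ᵥ x = (H⁻¹ *ᵥ θ) ⬝ᵥ (H *ᵥ x) := by
    conv_lhs => rw [← inv_mulVec_aux hH x]
    rw [Matrix.dotProduct_mulVec, ← Matrix.mulVec_transpose, Matrix.transpose_nonsing_inv, ht]
  rw [h1]
  have := real_inner_le_norm (WithLp.toLp 2 (H⁻¹ *ᵥ θ)) (WithLp.toLp 2 (H *ᵥ x))
  refine le_trans (le_of_eq ?_) this
  simp [PiLp.inner_apply, dotProduct, mul_comm]

theorem matNormG_le_aux {N : ℕ} {G H : Matrix (Fin N) (Fin N) ℝ} (hH : H.PosDef)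
    (hs : H * H = G) (A : Matrix (Fin N) (Fin N) ℝ) (c : ℝ) (hA : matNormG G A ≤ c)
    (x : Fin N → ℝ) : normG G (A *ᵥ x) ≤ c * normG G x := by
  by_cases hx : x = 0
  · subst hx; simp [normG]
  have hpos : ∀ y : Fin N → ℝ, y ≠ 0 → 0 < normG G y := by
    intro y hy
    rw [normG_eq_aux hH hs, norm_pos_iff]
    intro h0
    apply hy
    have : H *ᵥ y = 0 := by simpa using h0
    rw [← inv_mulVec_aux hH y, this, Matrix.mulVec_zero]
  rw [← div_le_iff₀ (hpos x hx)]
  unfold matNormG at hA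
  refine le_trans ?_ hA
  refine le_csSup ?_ ⟨x, hx, rfl⟩
  refine ⟨‖Matrix.toEuclideanCLM (𝕜 := ℝ) (H * A * H⁻¹)‖, ?_⟩
  rintro _ ⟨y, hy, rfl⟩
  rw [div_le_iff₀ (hpos y hy), normG_eq_aux hH hs, normG_eq_aux hH hs]
  refine le_trans (le_of_eq ?_)
    ((Matrix.toEuclideanCLM (𝕜 := ℝ) (H * A * H⁻¹)).le_opNorm (WithLp.toLp 2 (H *ᵥ y)))
  rw [Matrix.toEuclideanCLM_toLp, ← Matrix.mulVec_mulVec, inv_mulVec_aux hH,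
    Matrix.mulVec_mulVec]

theorem unroll_aux {N : ℕ} (A : Matrix (Fin N) (Fin N) ℝ) (e d : ℕ → Fin N → ℝ) (a : ℕ)
    (h : ∀ k ≥ a, e (k + 1) = A *ᵥ e k + d k) (n : ℕ) :
    e (a + n) = (A ^ n) *ᵥ e a + ∑ j ∈ Finset.range n, (A ^ (n - 1 - j)) *ᵥ d (a + j) := by
  induction n with
  | zero => simp
  | succ n ih =>
    rw [← add_assoc, h _ (by omega), ih, Finset.sum_range_succ, Matrix.mulVec_add,
      Matrix.mulVec_mulVec, ← pow_succ', Matrix.mulVec_sum, ← add_assoc]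
    congr 1
    · congr 1
      refine Finset.sum_congr rfl fun j hj => ?_
      have := Finset.mem_range.1 hj
      rw [Matrix.mulVec_mulVec, ← pow_succ']
      congr 2
      omega
    · simp

theorem decay_aux {N : ℕ} {G H : Matrix (Fin N) (Fin N) ℝ} (hH : H.PosDef)
    (hs : H * H = G) (A : Matrix (Fin N) (Fin N) ℝ) (e d : ℕ → Fin N → ℝ) (a : ℕ)
    (h : ∀ k ≥ a, e (k + 1) = A *ᵥ e k + d k) (M γ η C : ℝ) (hM : 1 ≤ M) (h0 : 0 < γ)
    (h1 : γ < 1) (hA : ∀ i : ℕ, matNormG G (A ^ i) ≤ M * γ ^ i) (hη : normG G (e a) ≤ η)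
    (hC : ∀ k ≥ a, normG G (d k) ≤ C) (n : ℕ) : ∀ t : ℕ,
    normG G ((A ^ t) *ᵥ e (a + n)) ≤
      M * γ ^ (t + n) * η + M * γ ^ t * C / (1 - γ) * (1 - γ ^ n) := by
  induction n with
  | zero =>
    intro t
    simpa using (matNormG_le_aux hH hs _ _ (hA t) (e a)).trans
      (mul_le_mul_of_nonneg_left hη (by positivity))
  | succ n ih =>
    intro t
    have hd := (matNormG_le_aux hH hs _ _ (hA t) (d (a + n))).trans
      (mul_le_mul_of_nonneg_left (hC (a + n) (by omega)) (by positivity))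
    rw [← add_assoc, h _ (by omega), Matrix.mulVec_add, Matrix.mulVec_mulVec, ← pow_succ]
    refine (normG_add_aux hH hs _ _).trans ((add_le_add (ih (t + 1)) hd).trans (le_of_eq ?_))
    have : 1 - γ ≠ 0 := by linarith
    field_simp
    ring

/-- **Error bound for constraint tightening (Section VI, Theorem 3 ingredient).**
For the error dynamics `ε_{k+1} = A_ε ε_k + B_ε r_k + G_ε ω_k` (for `k ≥ k̲`,
`k̲ = k₀ - 2τ`), with `‖A_ε^i‖_G ≤ M γ^i`, `‖ε_k̲‖_G ≤ η_k̲`,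
`‖B_ε r_j‖_G ≤ C_r`, `‖G_ε ω_j‖_G ≤ C_ω` and `r_j ∈ R`, `ω_j ∈ Ω` for all
`j ≥ k̲`, it holds for every row vector `θ` and every `k ≥ k₀` that
`θᵀ ε_k ≤ Δ⁽¹⁾(θ) + Δ⁽²⁾(θ)`, where
`Δ⁽¹⁾(θ) = ‖G^{-1/2}θ‖₂ (M γ^{2τ} η_k̲ + M γ^τ (C_r + C_ω)/(1-γ))` and
`Δ⁽²⁾(θ) = sup {θᵀ ∑_{j=0}^{τ-1} A_ε^{τ-1-j}(B_ε ρ_j + G_ε σ_j) : ρ_j ∈ R, σ_j ∈ Ω}`.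
Here `G^{1/2}` is the positive definite square root of `G`, provided as `Ghalf`. -/
theorem error_bound_tracking
    (N q s : ℕ)
    (Aeps : Matrix (Fin N) (Fin N) ℝ) (Beps : Matrix (Fin N) (Fin q) ℝ)
    (Geps : Matrix (Fin N) (Fin s) ℝ)
    (kund τ k₀ : ℕ) (hτ : 1 ≤ τ) (hk₀ : k₀ = kund + 2 * τ)
    (ε : ℕ → Fin N → ℝ) (r : ℕ → Fin q → ℝ) (ω : ℕ → Fin s → ℝ)
    (hdyn : ∀ k ≥ kund, ε (k + 1) = Aeps.mulVec (ε k) + Beps.mulVec (r k) + Geps.mulVec (ω k))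
    (G : Matrix (Fin N) (Fin N) ℝ) (hGsymm : G.IsSymm) (hGpd : G.PosDef)
    (Ghalf : Matrix (Fin N) (Fin N) ℝ) (hGhalfpd : Ghalf.PosDef)
    (hGhalfsq : Ghalf * Ghalf = G)
    (M γ : ℝ) (hM : 1 ≤ M) (hγ : 0 < γ ∧ γ < 1)
    (hA : ∀ i : ℕ, matNormG G (Aeps ^ i) ≤ M * γ ^ i)
    (η : ℝ) (hinit : normG G (ε kund) ≤ η)
    (Cr Cω : ℝ)
    (hCr : ∀ j ≥ kund, normG G (Beps.mulVec (r j)) ≤ Cr)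
    (hCω : ∀ j ≥ kund, normG G (Geps.mulVec (ω j)) ≤ Cω)
    (R : Set (Fin q → ℝ)) (Ω : Set (Fin s → ℝ))
    (hR : IsCompact R) (hΩ : IsCompact Ω)
    (hrR : ∀ j ≥ kund, r j ∈ R) (hωΩ : ∀ j ≥ kund, ω j ∈ Ω) :
    ∀ θ : Fin N → ℝ, ∀ k ≥ k₀,
      θ ⬝ᵥ ε k ≤
        evNorm (Ghalf⁻¹.mulVec θ) *
          (M * γ ^ (2 * τ) * η + M * γ ^ τ * (Cr + Cω) / (1 - γ)) +
        sSup {c | ∃ ρ : ℕ → Fin q → ℝ, ∃ σ : ℕ → Fin s → ℝ,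
          (∀ j < τ, ρ j ∈ R) ∧ (∀ j < τ, σ j ∈ Ω) ∧
          c = θ ⬝ᵥ ∑ j ∈ Finset.range τ,
            (Aeps ^ (τ - 1 - j)).mulVec (Beps.mulVec (ρ j) + Geps.mulVec (σ j))} := by
  intro θ k hk
  obtain ⟨hγ0, hγ1⟩ := hγ
  set d : ℕ → Fin N → ℝ := fun k => Beps.mulVec (r k) + Geps.mulVec (ω k) with hd
  have hdyn' : ∀ k ≥ kund, ε (k + 1) = Aeps *ᵥ ε k + d k := by
    intro k hk
    rw [hdyn k hk, add_assoc]
  have hC : ∀ k ≥ kund, normG G (d k) ≤ Cr + Cω := fun k hk =>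
    (normG_add_aux hGhalfpd hGhalfsq _ _).trans (add_le_add (hCr k hk) (hCω k hk))
  obtain ⟨n, rfl⟩ : ∃ n, k = kund + n + τ := ⟨k - kund - τ, by omega⟩
  have hn : τ ≤ n := by omega
  have hη0 : 0 ≤ η := (Real.sqrt_nonneg _).trans hinit
  have hC0 : 0 ≤ Cr + Cω := (Real.sqrt_nonneg _).trans (hC kund le_rfl)
  have h1γ : 0 < 1 - γ := by linarith
  rw [unroll_aux Aeps ε d (kund + n) (fun k hk => hdyn' k (by omega)) τ, dotProduct_add]
  refine add_le_add ?_ ?_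
  · refine (dot_le_aux hGhalfpd hGhalfsq _ _).trans (mul_le_mul_of_nonneg_left ?_
      (Real.sqrt_nonneg _))
    refine (decay_aux hGhalfpd hGhalfsq Aeps ε d kund hdyn' M γ η (Cr + Cω) hM hγ0 hγ1 hA hinit
      hC n τ).trans (add_le_add ?_ ?_)
    · have : γ ^ (τ + n) ≤ γ ^ (2 * τ) := pow_le_pow_of_le_one hγ0.le hγ1.le (by omega)
      gcongr
    · refine mul_le_of_le_one_right (by positivity) ?_
      have : 0 < γ ^ n := by positivity
      linarith
  · refine le_csSup ?_ ⟨fun j => r (kund + n + j), fun j => ω (kund + n + j),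
      fun j _ => hrR _ (by omega), fun j _ => hωΩ _ (by omega), rfl⟩
    have hb : ∀ j : ℕ, ∃ b : ℝ, ∀ x ∈ R, ∀ y ∈ Ω,
        θ ⬝ᵥ (Aeps ^ (τ - 1 - j)).mulVec (Beps.mulVec x + Geps.mulVec y) ≤ b := by
      intro j
      have hcont : Continuous (fun p : (Fin q → ℝ) × (Fin s → ℝ) =>
          θ ⬝ᵥ (Aeps ^ (τ - 1 - j)).mulVec (Beps.mulVec p.1 + Geps.mulVec p.2)) := by
        fun_prop
      obtain ⟨b, hb⟩ := (hR.prod hΩ).bddAbove_image hcont.continuousOn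
      exact ⟨b, fun x hx y hy => hb ⟨(x, y), ⟨hx, hy⟩, rfl⟩⟩
    choose b hb using hb
    refine ⟨∑ j ∈ Finset.range τ, b j, ?_⟩
    rintro _ ⟨ρ, σ, hρ, hσ, rfl⟩
    rw [dotProduct_sum]
    exact Finset.sum_le_sum fun j hj =>
      hb j _ (hρ j (Finset.mem_range.1 hj)) _ (hσ j (Finset.mem_range.1 hj))
end

section
/- Let $A_\epsilon \in \mathbb{R}^{N \times N}$, $B_\epsilon \in \mathbb{R}^{N \times q}$, $G_\epsilon \in \mathbb{R}^{N \times s}$, let $G$ be symmetric positive definite, and suppose $\lVert A_\epsilon^i \rVert_G \leq M\gamma^i$ for all $i \geq 0$ for some $M \geq 1$ and $\gamma \in (0,1)$. Let $\underline{k} = k_0 - 2\tau$ for an integer $\tau \geq 1$, let $\epsilon_{\underline{k}}$ satisfy $\lVert \epsilon_{\underline{k}} \rVert_G \leq \eta_{\underline{k}}$, and let $r_j, \omega_j$ be sequences with $\lVert B_\epsilon r_j \rVert_G \leq C_r$ and $\lVert G_\epsilon \omega_j \rVert_G \leq C_\omega$ for all $j \geq \underline{k}$. Define, for $k > \underline{k}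 + \tau$, $\epsilon_k^{(1)} = A_\epsilon^{k - \underline{k}} \epsilon_{\underline{k}} + \sum_{j=\underline{k}}^{k-\tau-1} A_\epsilon^{k-1-j}(B_\epsilon r_j + G_\epsilon \omega_j)$. Then for all $k \geq k_0$: $\lVert \epsilon_k^{(1)} \rVert_G \leq M\gamma^{2\tau}\eta_{\underline{k}} + \frac{M\gamma^\tau(C_r + C_\omega)}{1-\gamma}$. -/
open Matrix

open scoped MatrixOrder Matrix.Norms.L2Operator in
theorem normG_factor {N : ℕ} (G : Matrix (Fin N) (Fin N) ℝ) (hG : G.PosDef) :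
    ∃ B : Matrix (Fin N) (Fin N) ℝ, IsUnit B.det ∧
      ∀ x, normG G x = ‖(WithLp.toLp 2 (B.mulVec x) : EuclideanSpace ℝ (Fin N))‖ := by
  obtain ⟨B, hB⟩ := CStarAlgebra.nonneg_iff_eq_star_mul_self.mp hG.posSemidef.nonneg
  rw [Matrix.star_eq_conjTranspose] at hB
  refine ⟨B, ?_, ?_⟩
  · have h := hG.det_pos
    rw [hB, Matrix.det_mul] at h
    exact isUnit_iff_ne_zero.mpr (right_ne_zero_of_mul h.ne')
  · intro x
    rw [EuclideanSpace.norm_eq, normG]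
    congr 1
    rw [hB, ← Matrix.mulVec_mulVec, Matrix.conjTranspose_eq_transpose_of_trivial,
      Matrix.dotProduct_mulVec, Matrix.vecMul_transpose]
    simp [dotProduct, sq]

theorem normG_add_le {N : ℕ} (G : Matrix (Fin N) (Fin N) ℝ) (hG : G.PosDef) (x y : Fin N → ℝ) :
    normG G (x + y) ≤ normG G x + normG G y := by
  obtain ⟨B, -, hB⟩ := normG_factor G hG
  simp only [hB, Matrix.mulVec_add, WithLp.toLp_add]
  exact norm_add_le _ _

theorem normG_zero {N : ℕ} (G : Matrix (Fin N) (Fin N) ℝ) : normG G 0 = 0 := by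
  simp [normG]

theorem normG_sum_le {N : ℕ} (G : Matrix (Fin N) (Fin N) ℝ) (hG : G.PosDef) (S : Finset ℕ)
    (f : ℕ → Fin N → ℝ) : normG G (∑ j ∈ S, f j) ≤ ∑ j ∈ S, normG G (f j) :=
  Finset.le_sum_of_subadditive _ (normG_zero G).le (normG_add_le G hG) _ _

theorem normG_mulVec_le {N : ℕ} (G : Matrix (Fin N) (Fin N) ℝ) (hG : G.PosDef)
    (A : Matrix (Fin N) (Fin N) ℝ) (x : Fin N → ℝ) :
    normG G (A.mulVec x) ≤ matNormG G A * normG G x := by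
  obtain ⟨B, hu, hB⟩ := normG_factor G hG
  by_cases hx : x = 0
  · subst hx
    simp [normG_zero]
  have hpos : ∀ x : Fin N → ℝ, x ≠ 0 → 0 < normG G x := by
    intro x hx
    rw [hB, norm_pos_iff]
    intro h
    apply hx
    have h2 : B.mulVec x = 0 := by simpa using h
    have h3 : B⁻¹.mulVec (B.mulVec x) = x := by
      rw [Matrix.mulVec_mulVec, Matrix.nonsing_inv_mul _ hu, Matrix.one_mulVec]
    rw [← h3, h2, Matrix.mulVec_zero]
  rw [← div_le_iff₀ (hpos x hx)]
  refine le_csSup ?_ ⟨x, hx, rfl⟩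
  refine ⟨‖Matrix.toEuclideanCLM (𝕜 := ℝ) (B * A * B⁻¹)‖, ?_⟩
  rintro c ⟨y, hy, rfl⟩
  rw [div_le_iff₀ (hpos y hy), hB, hB]
  have h := (Matrix.toEuclideanCLM (𝕜 := ℝ) (B * A * B⁻¹)).le_opNorm (WithLp.toLp 2 (B.mulVec y))
  rw [Matrix.toEuclideanCLM_toLp, Matrix.mulVec_mulVec, Matrix.mul_assoc,
    Matrix.nonsing_inv_mul _ hu, Matrix.mul_one, ← Matrix.mulVec_mulVec] at h
  exact h

/-- **Bound on `ε_k⁽¹⁾` (inequality (10) of the paper).**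
With `‖A_ε^i‖_G ≤ M γ^i` (`M ≥ 1`, `γ ∈ (0,1)`), `‖ε_k̲‖_G ≤ η_k̲`,
`‖B_ε r_j‖_G ≤ C_r` and `‖G_ε ω_j‖_G ≤ C_ω` for all `j ≥ k̲` (where
`k̲ = k₀ - 2τ`, `τ ≥ 1`), the term
`ε_k⁽¹⁾ = A_ε^{k-k̲} ε_k̲ + ∑_{j=k̲}^{k-τ-1} A_ε^{k-1-j}(B_ε r_j + G_ε ω_j)`
satisfies, for all `k ≥ k₀`,
`‖ε_k⁽¹⁾‖_G ≤ M γ^{2τ} η_k̲ + M γ^τ (C_r + C_ω)/(1-γ)`. -/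
theorem eps1_bound
    (N q s : ℕ)
    (Aeps : Matrix (Fin N) (Fin N) ℝ) (Beps : Matrix (Fin N) (Fin q) ℝ)
    (Geps : Matrix (Fin N) (Fin s) ℝ)
    (G : Matrix (Fin N) (Fin N) ℝ) (hGsymm : G.IsSymm) (hGpd : G.PosDef)
    (M γ : ℝ) (hM : 1 ≤ M) (hγ : 0 < γ ∧ γ < 1)
    (hA : ∀ i : ℕ, matNormG G (Aeps ^ i) ≤ M * γ ^ i)
    (kund τ k₀ : ℕ) (hτ : 1 ≤ τ) (hk₀ : k₀ = kund + 2 * τ)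
    (εinit : Fin N → ℝ) (η : ℝ) (hinit : normG G εinit ≤ η)
    (r : ℕ → Fin q → ℝ) (ω : ℕ → Fin s → ℝ)
    (Cr Cω : ℝ)
    (hCr : ∀ j ≥ kund, normG G (Beps.mulVec (r j)) ≤ Cr)
    (hCω : ∀ j ≥ kund, normG G (Geps.mulVec (ω j)) ≤ Cω) :
    ∀ k ≥ k₀,
      normG G ((Aeps ^ (k - kund)).mulVec εinit +
        ∑ j ∈ Finset.Ico kund (k - τ),
          (Aeps ^ (k - 1 - j)).mulVec (Beps.mulVec (r j) + Geps.mulVec (ω j))) ≤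
      M * γ ^ (2 * τ) * η + M * γ ^ τ * (Cr + Cω) / (1 - γ) := by
  intro k hk
  obtain ⟨h0, h1⟩ := hγ
  have hn : ∀ x, 0 ≤ normG G x := fun x => Real.sqrt_nonneg _
  have hη : 0 ≤ η := (hn _).trans hinit
  have hM0 : 0 ≤ M := by linarith
  have hC : 0 ≤ Cr + Cω :=
    add_nonneg ((hn _).trans (hCr kund le_rfl)) ((hn _).trans (hCω kund le_rfl))
  have key : ∀ i x, normG G ((Aeps ^ i).mulVec x) ≤ M * γ ^ i * normG G x := fun i x =>
    (normG_mulVec_le G hGpd _ x).trans (mul_le_mul_of_nonneg_right (hA i) (hn x))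
  refine (normG_add_le G hGpd _ _).trans (add_le_add ?_ ?_)
  · refine (key _ _).trans ?_
    have : γ ^ (k - kund) ≤ γ ^ (2 * τ) := pow_le_pow_of_le_one h0.le h1.le (by omega)
    have := hn εinit
    gcongr
  · refine (normG_sum_le G hGpd _ _).trans ?_
    have hterm : ∀ j ∈ Finset.Ico kund (k - τ),
        normG G ((Aeps ^ (k - 1 - j)).mulVec (Beps.mulVec (r j) + Geps.mulVec (ω j))) ≤
          M * (Cr + Cω) * γ ^ (k - 1 - j) := by
      intro j hj
      have hj' := (Finset.mem_Ico.mp hj).1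
      refine (key _ _).trans ?_
      have h2 : normG G (Beps.mulVec (r j) + Geps.mulVec (ω j)) ≤ Cr + Cω :=
        (normG_add_le G hGpd _ _).trans (add_le_add (hCr j hj') (hCω j hj'))
      have := mul_le_mul_of_nonneg_left h2 (mul_nonneg hM0 (pow_nonneg h0.le (k - 1 - j)))
      linarith
    refine (Finset.sum_le_sum hterm).trans ?_
    rw [← Finset.mul_sum]
    have hs : ∑ j ∈ Finset.Ico kund (k - τ), γ ^ (k - 1 - j) ≤ γ ^ τ / (1 - γ) := by
      have hre : ∑ j ∈ Finset.Ico kund (k - τ), γ ^ (k - 1 - j)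
          = ∑ i ∈ Finset.Ico τ (k - kund), γ ^ i := by
        refine Finset.sum_nbij' (fun j => k - 1 - j) (fun i => k - 1 - i) ?_ ?_ ?_ ?_ ?_ <;>
          intro a ha <;> simp only [Finset.mem_Ico] at * <;> omega
      rw [hre]
      exact geom_sum_Ico_le_of_lt_one h0.le h1
    calc M * (Cr + Cω) * ∑ j ∈ Finset.Ico kund (k - τ), γ ^ (k - 1 - j)
        ≤ M * (Cr + Cω) * (γ ^ τ / (1 - γ)) :=
          mul_le_mul_of_nonneg_left hs (mul_nonneg hM0 hC)
      _ = M * γ ^ τ * (Cr + Cω) / (1 - γ) := by ring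
end
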